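/- Suppose $\{v_n\}$ and $\{w_m\}$ are $\gamma$-uniformly distributed sequences in $[0,1]^d$, $d \geq 2$, with $\gamma \in (0,1/2]$. Let $\frac{1}{100} \leq a \leq b$, let $\Omega_{a,b} = \{(x,y) \in [0,1]^d \times [0,1]^d : a \leq x \cdot y \leq b\}$, and let $\psi$ be a smooth nonnegative function supported in the open cube $(0,1)^d$. Then $\sum_{\{(n,m) \in [1,N]^2 : a \leq v_n \cdot w_m \leq b\}} \psi(v_n)\psi(w_m) = N^2 \iint_{\Omega_{a,b}} \psi(x)\psi(y)\,dx\,dy + R(a,b,N)$, where for every $\epsilon > 0$ there is $C_\epsilon$ with $|R(a,b,N)| \leq C_\epsilon N^{2 - \gamma + \epsilon}$. -/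

import Mathlib

open Finset MeasureTheory

/-- Euclidean norm of an integer vector `k ∈ ℤ^d`. -/
noncomputable def intNorm {d : ℕ} (k : Fin d → ℤ) : ℝ :=
  Real.sqrt (∑ i, ((k i : ℝ)) ^ 2)

/-- The Euclidean dot product on `[0,1]^d ⊂ ℝ^d`. -/
def dotP {d : ℕ} (x y : Fin d → ℝ) : ℝ := ∑ i, x i * y i

/-- A sequence `{v_n}` in `[0,1]^d` is `γ`-uniformly distributed. -/
def IsGammaUD {d : ℕ} (γ : ℝ) (v : ℕ → Fin d → ℝ) : Prop :=
  ∀ ε : ℝ, 0 < ε → ∃ C : ℝ, 0 < C ∧ ∀ k : Fin d → ℤ, k ≠ 0 → ∀ N : ℕ, 1 ≤ N →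
    ‖(N : ℂ)⁻¹ * ∑ n ∈ Finset.range N,
        Complex.exp (2 * Real.pi * Complex.I * (∑ i, (k i : ℝ) * v n i))‖
      ≤ C * intNorm k ^ ε * (N : ℝ) ^ (-γ)

/-- The additive character `t ↦ exp (2πit)` of `ℝ`. -/
noncomputable def expTwoPi (t : ℝ) : ℂ := Complex.exp (2 * Real.pi * Complex.I * (t : ℂ))

lemma expTwoPi_add (s t : ℝ) : expTwoPi (s + t) = expTwoPi s * expTwoPi t := by
  simp only [expTwoPi, ← Complex.exp_add]
  push_cast
  ring_nf

lemma norm_expTwoPi (t : ℝ) : ‖expTwoPi t‖ = 1 := by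
  have : expTwoPi t = Complex.exp ((2 * Real.pi * t : ℝ) * Complex.I) := by
    unfold expTwoPi
    push_cast
    ring_nf
  rw [this, Complex.norm_exp_ofReal_mul_I]

@[fun_prop]
lemma continuous_expTwoPi : Continuous expTwoPi := by
  unfold expTwoPi
  fun_prop

lemma expTwoPi_re (t : ℝ) : (expTwoPi t).re = Real.cos (2 * Real.pi * t) := by
  have : expTwoPi t = Complex.exp ((2 * Real.pi * t : ℝ) * Complex.I) := by
    unfold expTwoPi
    push_cast
    ring_nf
  rw [this, Complex.exp_ofReal_mul_I_re]

lemma continuous_dotP {d : ℕ} (x : Fin d → ℝ) : Continuous (dotP x) := by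
  unfold dotP
  fun_prop

lemma dotP_comm {d : ℕ} (x y : Fin d → ℝ) : dotP x y = dotP y x := by
  simp only [dotP, mul_comm]

lemma dotP_add_left {d : ℕ} (x y z : Fin d → ℝ) : dotP (x + y) z = dotP x z + dotP y z := by
  simp only [dotP, Pi.add_apply, add_mul, Finset.sum_add_distrib]

lemma mFourier_coe {d : ℕ} (l : Fin d → ℤ) (y : Fin d → ℝ) :
    UnitAddTorus.mFourier l (fun i => (y i : UnitAddCircle)) =
      expTwoPi (dotP (fun i => (l i : ℝ)) y) := by
  simp only [UnitAddTorus.mFourier, ContinuousMap.coe_mk, fourier_coe_apply, expTwoPi,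
    ← Complex.exp_sum, dotP]
  push_cast
  rw [Finset.mul_sum]
  congr 1
  refine Finset.sum_congr rfl fun i _ => ?_
  ring

/-- The open unit cube. -/
abbrev openCube (d : ℕ) : Set (Fin d → ℝ) := {x | ∀ i, x i ∈ Set.Ioo (0 : ℝ) 1}

lemma hasCompactSupport_of_openCube {d : ℕ} {E : Type*} [Zero E]
    {g : (Fin d → ℝ) → E} (hs : tsupport g ⊆ openCube d) : HasCompactSupport g := by
  refine HasCompactSupport.of_support_subset_isCompact
    (isCompact_Icc (a := (0 : Fin d → ℝ)) (b := 1)) ?_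
  intro x hx
  have h := hs (subset_tsupport g hx)
  exact ⟨fun i => (h i).1.le, fun i => (h i).2.le⟩

/-- The `ℤ^d`-periodization of a function supported in the open unit cube is continuous. -/
lemma continuous_comp_equivIoc {d : ℕ} {g : (Fin d → ℝ) → ℂ} (hg : Continuous g)
    (hs : tsupport g ⊆ openCube d) :
    Continuous (fun z : UnitAddTorus (Fin d) =>
      g (fun i => (AddCircle.equivIoc 1 0 (z i) : ℝ))) := by
  rw [continuous_iff_continuousAt]
  intro z
  by_cases hz : ∀ i, z i ≠ ((0 : ℝ) : UnitAddCircle)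
  · refine hg.continuousAt.comp (f := fun z : UnitAddTorus (Fin d) =>
      fun i => (AddCircle.equivIoc 1 0 (z i) : ℝ)) ?_
    rw [continuousAt_pi]
    intro i
    have h1 := AddCircle.continuousAt_equivIoc (p := (1 : ℝ)) (a := 0) (hz i)
    have h2 : ContinuousAt (fun z : UnitAddTorus (Fin d) => z i) z :=
      (continuous_apply i).continuousAt
    exact continuous_subtype_val.continuousAt.comp (ContinuousAt.comp h1 h2)
  · push Not at hz
    obtain ⟨i, hi⟩ := hz
    set K : Set UnitAddCircle := (fun y : Fin d → ℝ => (y i : UnitAddCircle)) '' tsupport g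
    have hK : IsClosed K := by
      refine IsCompact.isClosed (IsCompact.image (hasCompactSupport_of_openCube hs) ?_)
      exact (AddCircle.continuous_mk' 1).comp (continuous_apply i)
    have hzK : z i ∉ K := by
      rintro ⟨y, hy, hyz⟩
      have hy' := hs hy i
      simp only [hi] at hyz
      have h1 := AddCircle.coe_equivIco_mk_apply (p := (1 : ℝ)) (y i)
      have h2 := AddCircle.coe_equivIco_mk_apply (p := (1 : ℝ)) 0
      rw [hyz, h2] at h1
      simp only [div_one, mul_one, Int.fract_zero, Int.fract_eq_self.2 ⟨hy'.1.le, hy'.2⟩] at h1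
      exact absurd h1 hy'.1.ne
    have hev : (fun z : UnitAddTorus (Fin d) =>
        g (fun i => (AddCircle.equivIoc 1 0 (z i) : ℝ))) =ᶠ[nhds z] fun _ => 0 := by
      have : {z : UnitAddTorus (Fin d) | z i ∈ Kᶜ} ∈ nhds z :=
        (hK.isOpen_compl.preimage (continuous_apply i)).mem_nhds hzK
      filter_upwards [this] with z' hz'
      by_contra hne
      refine hz' ⟨_, subset_tsupport g hne, ?_⟩
      exact AddCircle.coe_equivIoc
    exact continuousAt_const.congr hev.symm

/-- Fourier expansion on the unit cube of a function supported in the open unit cube. -/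
lemma hasSum_fourier_of_openCube {d : ℕ} {g : (Fin d → ℝ) → ℂ} (hg : Continuous g)
    (hs : tsupport g ⊆ openCube d)
    (hsum : Summable fun l : Fin d → ℤ =>
      ∫ y, expTwoPi (dotP (fun i => -(l i : ℝ)) y) * g y)
    {y : Fin d → ℝ} (hy : y ∈ Set.Icc (0 : Fin d → ℝ) 1) :
    HasSum (fun l : Fin d → ℤ => (∫ y, expTwoPi (dotP (fun i => -(l i : ℝ)) y) * g y) *
      expTwoPi (dotP (fun i => (l i : ℝ)) y)) (g y) := by
  let F : C(UnitAddTorus (Fin d), ℂ) := ⟨_, continuous_comp_equivIoc hg hs⟩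
  have hzero : ∀ y i, y i ∉ Set.Ioo (0 : ℝ) 1 → g y = 0 := by
    intro y i hyi
    by_contra h
    exact hyi (hs (subset_tsupport g h) i)
  have hIoc : ∀ y : Fin d → ℝ, (∀ i, y i ∈ Set.Ioc (0 : ℝ) 1) →
      F (fun i => (y i : UnitAddCircle)) = g y := by
    intro y hy
    change g _ = g y
    congr 1
    funext i
    have := AddCircle.equivIoc_coe_of_mem (p := (1 : ℝ)) (a := 0) (y := y i) (by simpa using hy i)
    rw [this]
  have hFy : F (fun i => (y i : UnitAddCircle)) = g y := by
    by_cases h : ∀ i, y i ∈ Set.Ioc (0 : ℝ) 1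
    · exact hIoc y h
    · push Not at h
      obtain ⟨i, hi⟩ := h
      have h0 : y i = 0 := by
        by_contra h0
        exact hi ⟨lt_of_le_of_ne (hy.1 i) (Ne.symm h0), hy.2 i⟩
      rw [hzero y i (by simp [h0])]
      refine hzero _ i ?_
      have : ((y i : ℝ) : UnitAddCircle) = ((1 : ℝ) : UnitAddCircle) := by
        rw [h0, AddCircle.coe_period]; rfl
      simp only [this]
      rw [AddCircle.equivIoc_coe_of_mem (p := (1 : ℝ)) (a := 0) (y := 1) (by simp)]
      simp
  have hcoef : ∀ l, UnitAddTorus.mFourierCoeff F l =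
      ∫ y, expTwoPi (dotP (fun i => -(l i : ℝ)) y) * g y := by
    intro l
    rw [UnitAddTorus.mFourierCoeff_eq_integral F l 0]
    have hm : MeasurableSet {x : Fin d → ℝ | ∀ i, x i ∈ Set.Ioc ((0 : Fin d → ℝ) i)
        ((0 : Fin d → ℝ) i + 1)} := MeasurableSet.univ_pi' fun i => measurableSet_Ioc
    rw [← setIntegral_eq_integral_of_forall_compl_eq_zero (s := {x : Fin d → ℝ | ∀ i, x i ∈
      Set.Ioc ((0 : Fin d → ℝ) i) ((0 : Fin d → ℝ) i + 1)})
      (f := fun y => expTwoPi (dotP (fun i => -(l i : ℝ)) y) * g y)]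
    · refine setIntegral_congr_fun hm fun x hx => ?_
      simp only [Set.mem_ofPred_eq, Pi.zero_apply, zero_add] at hx
      simp only [mFourier_coe, hIoc x hx, smul_eq_mul, Pi.neg_apply, Int.cast_neg]
    · intro x hx
      simp only [Set.mem_ofPred_eq, not_forall, Pi.zero_apply, zero_add] at hx
      obtain ⟨i, hi⟩ := hx
      rw [hzero x i fun h => hi ⟨h.1, h.2.le⟩, mul_zero]
  have hsum' : Summable (UnitAddTorus.mFourierCoeff F) := by
    refine hsum.congr fun l => ?_
    rw [hcoef]
  have := UnitAddTorus.hasSum_mFourier_series_apply_of_summable hsum'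
    (fun i => (y i : UnitAddCircle))
  rw [hFy] at this
  simpa only [hcoef, smul_eq_mul, mFourier_coe] using this

lemma exists_schwartzMap_eq {d : ℕ} {ψ : (Fin d → ℝ) → ℝ} (hψ : ContDiff ℝ (⊤ : ℕ∞) ψ)
    (hc : HasCompactSupport ψ) :
    ∃ Φ : SchwartzMap (EuclideanSpace ℝ (Fin d)) ℂ, ∀ y, Φ (WithLp.toLp 2 y) = (ψ y : ℂ) := by
  have hφ : ContDiff ℝ (⊤ : ℕ∞) fun x : EuclideanSpace ℝ (Fin d) => (ψ (WithLp.ofLp x) : ℂ) :=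
    Complex.ofRealCLM.contDiff.comp (hψ.comp (EuclideanSpace.equiv (Fin d) ℝ).contDiff)
  have hφc : HasCompactSupport fun x : EuclideanSpace ℝ (Fin d) => (ψ (WithLp.ofLp x) : ℂ) := by
    have h1 : HasCompactSupport (fun x : EuclideanSpace ℝ (Fin d) => ψ (WithLp.ofLp x)) :=
      hc.comp_homeomorph (EuclideanSpace.equiv (Fin d) ℝ).toHomeomorph
    exact h1.comp_left (g := fun t : ℝ => (t : ℂ)) (by simp)
  exact ⟨hφc.toSchwartzMap hφ, fun y => rfl⟩

/-- Rapid decay of the Fourier transform of a smooth compactly supported function. -/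
lemma exists_fourier_decay {d : ℕ} {ψ : (Fin d → ℝ) → ℝ} (hψ : ContDiff ℝ (⊤ : ℕ∞) ψ)
    (hc : HasCompactSupport ψ) (M : ℕ) :
    ∃ C : ℝ, 0 < C ∧ ∀ η : Fin d → ℝ,
      ‖∫ y, expTwoPi (dotP (fun i => -(η i)) y) * (ψ y : ℂ)‖ ≤ C / (1 + ‖η‖) ^ M := by
  obtain ⟨Φ, hΦ⟩ := exists_schwartzMap_eq hψ hc
  obtain ⟨C, hdec⟩ : ∃ C : ℝ, ∀ x, (1 + ‖x‖) ^ M * ‖FourierTransform.fourier Φ x‖ ≤ C :=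
    ⟨_, fun x => by
      simpa only [norm_iteratedFDeriv_zero] using
        SchwartzMap.one_add_le_sup_seminorm_apply (𝕜 := ℝ) (m := (M, 0)) (le_refl M)
          (le_refl 0) (FourierTransform.fourier Φ) x⟩
  refine ⟨max C 1, by positivity, fun η => ?_⟩
  have h := hdec (WithLp.toLp 2 η)
  rw [SchwartzMap.fourier_coe, Real.fourier_eq'] at h
  have hint : (∫ v : EuclideanSpace ℝ (Fin d),
      Complex.exp (↑(-2 * Real.pi * inner ℝ v (WithLp.toLp 2 η)) * Complex.I) • Φ v) =
      ∫ y, expTwoPi (dotP (fun i => -(η i)) y) * (ψ y : ℂ) := by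
    rw [← (PiLp.volume_preserving_toLp (Fin d)).integral_comp
      (MeasurableEquiv.toLp 2 (Fin d → ℝ)).measurableEmbedding]
    refine integral_congr_ae (Filter.Eventually.of_forall fun y => ?_)
    simp only [smul_eq_mul, hΦ]
    congr 1
    simp only [expTwoPi, dotP, PiLp.inner_apply, RCLike.inner_apply, conj_trivial]
    congr 1
    push_cast
    simp only [neg_mul, Finset.sum_neg_distrib]
    ring
  rw [hint] at h
  have hn : ‖η‖ ≤ ‖(WithLp.toLp 2 η : EuclideanSpace ℝ (Fin d))‖ := by
    rw [pi_norm_le_iff_of_nonneg (norm_nonneg _)]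
    intro i
    exact PiLp.norm_apply_le (WithLp.toLp 2 η : EuclideanSpace ℝ (Fin d)) i
  rw [le_div_iff₀ (by positivity), mul_comm]
  calc _ ≤ (1 + ‖(WithLp.toLp 2 η : EuclideanSpace ℝ (Fin d))‖) ^ M *
        ‖∫ y, expTwoPi (dotP (fun i => -(η i)) y) * (ψ y : ℂ)‖ := by gcongr
    _ ≤ C := h
    _ ≤ _ := le_max_left _ _

lemma summable_one_add_norm_pow (d : ℕ) :
    Summable fun l : Fin d → ℤ => 1 / (1 + ‖l‖) ^ (2 * d) := by
  have h1 : Summable fun j : ℤ => 1 / (1 + |(j : ℝ)|) ^ 2 := by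
    have h := (Real.summable_one_div_int_pow (p := 2)).2 one_lt_two
    refine Summable.of_norm_bounded_eventually h ?_
    rw [Filter.eventually_cofinite]
    refine (Set.finite_singleton (0 : ℤ)).subset fun j hj => ?_
    by_contra h0
    refine hj ?_
    have : (0 : ℝ) < |(j : ℝ)| := by simpa using h0
    rw [Real.norm_of_nonneg (by positivity), ← sq_abs (j : ℝ)]
    gcongr
    linarith
  set S : ℝ := ∑' j : ℤ, 1 / (1 + |(j : ℝ)|) ^ 2 with hS
  have hnn : ∀ l : Fin d → ℤ, 0 ≤ 1 / (1 + ‖l‖) ^ (2 * d) := fun l => by positivity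
  refine summable_of_sum_le (c := S ^ d) hnn fun s => ?_
  classical
  have hterm : ∀ l : Fin d → ℤ, 1 / (1 + ‖l‖) ^ (2 * d) ≤ ∏ i, 1 / (1 + |(l i : ℝ)|) ^ 2 := by
    intro l
    have h : ∏ i, (1 + |(l i : ℝ)|) ^ 2 ≤ (1 + ‖l‖) ^ (2 * d) := by
      calc ∏ i, (1 + |(l i : ℝ)|) ^ 2 ≤ ∏ _i : Fin d, (1 + ‖l‖) ^ 2 := by
            refine Finset.prod_le_prod (fun i _ => by positivity) fun i _ => ?_
            have : |(l i : ℝ)| ≤ ‖l‖ := by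
              rw [← Real.norm_eq_abs, Int.norm_cast_real]
              exact norm_le_pi_norm l i
            gcongr
        _ = _ := by simp [pow_mul]
    rw [Finset.prod_div_distrib, Finset.prod_const_one]
    exact one_div_le_one_div_of_le (Finset.prod_pos fun i _ => by positivity) h
  let t : Fin d → Finset ℤ := fun i => s.image fun l => l i
  have hsub : s ⊆ Fintype.piFinset t := fun l hl =>
    Fintype.mem_piFinset.2 fun i => Finset.mem_image_of_mem _ hl
  calc ∑ l ∈ s, 1 / (1 + ‖l‖) ^ (2 * d)
      ≤ ∑ l ∈ s, ∏ i, 1 / (1 + |(l i : ℝ)|) ^ 2 := Finset.sum_le_sum fun l _ => hterm l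
    _ ≤ ∑ l ∈ Fintype.piFinset t, ∏ i, 1 / (1 + |(l i : ℝ)|) ^ 2 :=
        Finset.sum_le_sum_of_subset_of_nonneg hsub fun l _ _ =>
          Finset.prod_nonneg fun i _ => by positivity
    _ = ∏ i : Fin d, ∑ j ∈ t i, 1 / (1 + |(j : ℝ)|) ^ 2 :=
        (Finset.prod_univ_sum t fun _ j => 1 / (1 + |(j : ℝ)|) ^ 2).symm
    _ ≤ ∏ _i : Fin d, S :=
        Finset.prod_le_prod (fun i _ => Finset.sum_nonneg fun j _ => by positivity) fun i _ =>
          h1.sum_le_tsum _ fun j _ => by positivity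
    _ = _ := by simp

lemma intNorm_le {d : ℕ} (l : Fin d → ℤ) : intNorm l ≤ (d + 1) * ‖l‖ := by
  refine Real.sqrt_le_iff.2 ⟨by positivity, ?_⟩
  calc ∑ i, ((l i : ℝ)) ^ 2 ≤ ∑ _i : Fin d, ‖l‖ ^ 2 := by
        refine Finset.sum_le_sum fun i _ => ?_
        have h : |(l i : ℝ)| ≤ ‖l‖ := by
          rw [← Real.norm_eq_abs, Int.norm_cast_real]
          exact norm_le_pi_norm l i
        rw [← sq_abs]
        gcongr
    _ = d * ‖l‖ ^ 2 := by simp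
    _ ≤ ((d + 1) * ‖l‖) ^ 2 := by
        rw [mul_pow]
        gcongr
        have : (0 : ℝ) ≤ d := by positivity
        nlinarith

lemma IsGammaUD.norm_sum_le {d : ℕ} {γ : ℝ} {w : ℕ → Fin d → ℝ} (hw : IsGammaUD γ w) {ε : ℝ}
    (hε : 0 < ε) :
    ∃ C : ℝ, 0 < C ∧ ∀ l : Fin d → ℤ, l ≠ 0 → ∀ N : ℕ, 1 ≤ N →
      ‖∑ n ∈ Finset.range N, expTwoPi (dotP (fun i => (l i : ℝ)) (w n))‖ ≤
        C * intNorm l ^ ε * (N : ℝ) ^ (1 - γ) := by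
  obtain ⟨C, hC, h⟩ := hw ε hε
  refine ⟨C, hC, fun l hl N hN => ?_⟩
  have hN0 : (0 : ℝ) < N := by exact_mod_cast hN
  have h1 := h l hl N hN
  have h2 : ∀ n, Complex.exp (2 * Real.pi * Complex.I * (∑ i, (l i : ℝ) * w n i)) =
      expTwoPi (dotP (fun i => (l i : ℝ)) (w n)) := by
    intro n
    simp only [expTwoPi, dotP]
  simp only [h2] at h1
  rw [norm_mul, norm_inv, Complex.norm_natCast, inv_mul_le_iff₀ hN0] at h1
  refine h1.trans_eq ?_
  rw [sub_eq_add_neg, Real.rpow_add hN0, Real.rpow_one]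
  ring

lemma floor_shift_le {d : ℕ} (ξ : Fin d → ℝ) (l : Fin d → ℤ) :
    1 + ‖l - fun i => ⌊ξ i⌋‖ ≤ 2 * (1 + ‖(fun i => (l i : ℝ)) - ξ‖) := by
  have : ‖l - fun i => ⌊ξ i⌋‖ ≤ ‖(fun i => (l i : ℝ)) - ξ‖ + 1 := by
    rw [pi_norm_le_iff_of_nonneg (by positivity)]
    intro i
    rw [← Int.norm_cast_real]
    have h1 := norm_le_pi_norm ((fun i => (l i : ℝ)) - ξ) i
    simp only [Pi.sub_apply, Int.cast_sub, Real.norm_eq_abs] at h1 ⊢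
    have h2 := Int.floor_le (ξ i)
    have h3 := Int.lt_floor_add_one (ξ i)
    rw [abs_le] at h1 ⊢
    constructor <;> linarith
  have := norm_nonneg ((fun i => (l i : ℝ)) - ξ)
  linarith

lemma norm_intCast_le {d : ℕ} (ξ : Fin d → ℝ) (l : Fin d → ℤ) :
    ‖l‖ ≤ (1 + ‖(fun i => (l i : ℝ)) - ξ‖) * (1 + ‖ξ‖) := by
  have h1 : ‖l‖ ≤ ‖(fun i => (l i : ℝ)) - ξ‖ + ‖ξ‖ := by
    rw [pi_norm_le_iff_of_nonneg (by positivity)]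
    intro i
    rw [← Int.norm_cast_real]
    refine (norm_le_pi_norm (fun i => (l i : ℝ)) i).trans ?_
    exact norm_le_norm_sub_add _ _
  nlinarith [norm_nonneg ((fun i => (l i : ℝ)) - ξ), norm_nonneg ξ]

/-- A smooth cutoff makes the equidistribution estimate available at all real frequencies. -/
lemma exists_norm_expSum_sub_integral_le {d : ℕ} {γ : ℝ} {w : ℕ → Fin d → ℝ}
    (hw : ∀ n, w n ∈ Set.Icc (0 : Fin d → ℝ) 1) (hUD : IsGammaUD γ w)
    {ψ : (Fin d → ℝ) → ℝ} (hψ : ContDiff ℝ (⊤ : ℕ∞) ψ) (hs : tsupport ψ ⊆ openCube d)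
    {ε : ℝ} (hε : 0 < ε) (hε1 : ε ≤ 1) :
    ∃ C : ℝ, 0 < C ∧ ∀ (ξ : Fin d → ℝ) (N : ℕ), 1 ≤ N →
      ‖∑ n ∈ Finset.range N, expTwoPi (dotP ξ (w n)) * (ψ (w n) : ℂ) -
        N * ∫ y, expTwoPi (dotP ξ y) * (ψ y : ℂ)‖ ≤
        C * (N : ℝ) ^ (1 - γ) * (1 + ‖ξ‖) ^ ε := by
  obtain ⟨C₁, hC₁, hdec⟩ := exists_fourier_decay hψ (hasCompactSupport_of_openCube hs) (2 * d + 1)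
  obtain ⟨C₂, hC₂, hexp⟩ := hUD.norm_sum_le hε
  set S : ℝ := ∑' l : Fin d → ℤ, 1 / (1 + ‖l‖) ^ (2 * d) with hS
  have hS0 : 0 ≤ S := tsum_nonneg fun l => by positivity
  refine ⟨C₁ * C₂ * (d + 1) ^ ε * 2 ^ (2 * d) * (S + 1), by positivity, fun ξ N hN => ?_⟩
  set m : Fin d → ℤ := fun i => ⌊ξ i⌋
  set g : (Fin d → ℝ) → ℂ := fun y => expTwoPi (dotP ξ y) * (ψ y : ℂ) with hg
  have hgc : Continuous g := by
    have := continuous_dotP ξ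
    have := hψ.continuous
    fun_prop
  have hgs : tsupport g ⊆ openCube d := by
    refine (closure_mono fun y hy => ?_).trans hs
    simp only [Function.mem_support, hg] at hy ⊢
    intro h
    simp [h] at hy
  set c : (Fin d → ℤ) → ℂ := fun l => ∫ y, expTwoPi (dotP (fun i => -(l i : ℝ)) y) * g y with hc
  have hcb : ∀ l, ‖c l‖ ≤ C₁ / (1 + ‖(fun i => (l i : ℝ)) - ξ‖) ^ (2 * d + 1) := by
    intro l
    have heq : c l =
        ∫ y, expTwoPi (dotP (fun i => -((fun i => (l i : ℝ)) - ξ) i) y) * (ψ y : ℂ) := by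
      simp only [hc, hg]
      congr 1
      funext y
      rw [← mul_assoc, ← expTwoPi_add, ← dotP_add_left]
      congr 3
      funext i
      simp only [Pi.add_apply, Pi.sub_apply]
      ring
    rw [heq]
    exact hdec ((fun i => (l i : ℝ)) - ξ)
  have hshift : ∀ l : Fin d → ℤ, 1 / (1 + ‖(fun i => (l i : ℝ)) - ξ‖) ^ (2 * d) ≤
      2 ^ (2 * d) * (1 / (1 + ‖l - m‖) ^ (2 * d)) := by
    intro l
    rw [mul_one_div, div_le_div_iff₀ (by positivity) (by positivity), one_mul, ← mul_pow]
    exact pow_le_pow_left₀ (by positivity) (floor_shift_le ξ l) _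
  have hsumm : HasSum (fun l : Fin d → ℤ => 1 / (1 + ‖l - m‖) ^ (2 * d)) S :=
    ((Equiv.subRight m).hasSum_iff (f := fun l : Fin d → ℤ => 1 / (1 + ‖l‖) ^ (2 * d))).2
      (summable_one_add_norm_pow d).hasSum
  have hcs : Summable c := by
    refine Summable.of_norm_bounded (hsumm.summable.mul_left (C₁ * 2 ^ (2 * d))) fun l => ?_
    calc ‖c l‖ ≤ C₁ / (1 + ‖(fun i => (l i : ℝ)) - ξ‖) ^ (2 * d + 1) := hcb l
      _ ≤ C₁ / (1 + ‖(fun i => (l i : ℝ)) - ξ‖) ^ (2 * d) := by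
          gcongr
          · linarith [norm_nonneg ((fun i => (l i : ℝ)) - ξ)]
          · omega
      _ = C₁ * (1 / (1 + ‖(fun i => (l i : ℝ)) - ξ‖) ^ (2 * d)) := by ring
      _ ≤ C₁ * (2 ^ (2 * d) * (1 / (1 + ‖l - m‖) ^ (2 * d))) := by
          gcongr
          exact hshift l
      _ = _ := by ring
  have hexpand : HasSum (fun l => c l * ∑ n ∈ Finset.range N,
      expTwoPi (dotP (fun i => (l i : ℝ)) (w n))) (∑ n ∈ Finset.range N, g (w n)) := by
    have := hasSum_sum (s := Finset.range N) fun n _ =>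
      hasSum_fourier_of_openCube hgc hgs hcs (hw n)
    simpa only [← Finset.mul_sum] using this
  have h0 : c 0 * ∑ n ∈ Finset.range N,
      expTwoPi (dotP (fun i => (((0 : Fin d → ℤ) i : ℤ) : ℝ)) (w n)) = N * ∫ y, g y := by
    have hz : ∀ y : Fin d → ℝ, dotP (fun _ => 0) y = 0 := fun y => by simp [dotP]
    simp [hc, hz, expTwoPi, mul_comm]
  have hdiff := hexpand.sub (hasSum_ite_eq (0 : Fin d → ℤ) (N * ∫ y, g y))
  rw [← hdiff.tsum_eq]
  have hB0 : 0 ≤ C₁ * C₂ * (d + 1) ^ ε * 2 ^ (2 * d) * (N : ℝ) ^ (1 - γ) * (1 + ‖ξ‖) ^ ε := by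
    positivity
  refine (tsum_of_norm_bounded (hsumm.mul_left
    (C₁ * C₂ * (d + 1) ^ ε * 2 ^ (2 * d) * (N : ℝ) ^ (1 - γ) * (1 + ‖ξ‖) ^ ε)) fun l => ?_).trans ?_
  · by_cases hl : l = 0
    · subst hl
      rw [if_pos rfl, h0, sub_self, norm_zero]
      exact mul_nonneg hB0 (by positivity)
    · rw [if_neg hl, sub_zero, norm_mul]
      set r := ‖(fun i => (l i : ℝ)) - ξ‖
      have hr : 0 ≤ r := norm_nonneg _
      have hint : intNorm l ^ ε ≤ (d + 1) ^ ε * (1 + r) * (1 + ‖ξ‖) ^ ε := by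
        calc intNorm l ^ ε ≤ ((d + 1) * ((1 + r) * (1 + ‖ξ‖))) ^ ε := by
              refine Real.rpow_le_rpow (Real.sqrt_nonneg _) ?_ hε.le
              exact (intNorm_le l).trans (by gcongr; exact norm_intCast_le ξ l)
          _ = (d + 1) ^ ε * (1 + r) ^ ε * (1 + ‖ξ‖) ^ ε := by
              rw [Real.mul_rpow (by positivity) (by positivity),
                Real.mul_rpow (by positivity) (by positivity), mul_assoc]
          _ ≤ _ := by
              gcongr
              calc (1 + r) ^ ε ≤ (1 + r) ^ (1 : ℝ) :=
                    Real.rpow_le_rpow_of_exponent_le (by linarith) hε1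
                _ = 1 + r := Real.rpow_one _
      calc _ ≤ C₁ / (1 + r) ^ (2 * d + 1) * (C₂ * intNorm l ^ ε * (N : ℝ) ^ (1 - γ)) :=
            mul_le_mul (hcb l) (hexp l hl N hN) (norm_nonneg _) (by positivity)
        _ ≤ C₁ / (1 + r) ^ (2 * d + 1) *
            (C₂ * ((d + 1) ^ ε * (1 + r) * (1 + ‖ξ‖) ^ ε) * (N : ℝ) ^ (1 - γ)) := by gcongr
        _ = C₁ * C₂ * (d + 1) ^ ε * (N : ℝ) ^ (1 - γ) * (1 + ‖ξ‖) ^ ε *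
            (1 / (1 + r) ^ (2 * d)) := by
            rw [pow_succ]
            field_simp
        _ ≤ C₁ * C₂ * (d + 1) ^ ε * (N : ℝ) ^ (1 - γ) * (1 + ‖ξ‖) ^ ε *
            (2 ^ (2 * d) * (1 / (1 + ‖l - m‖) ^ (2 * d))) := by
            gcongr
            exact hshift l
        _ = _ := by ring
  · calc _ = C₁ * C₂ * (d + 1) ^ ε * 2 ^ (2 * d) * S * (N : ℝ) ^ (1 - γ) * (1 + ‖ξ‖) ^ ε := by ring
      _ ≤ _ := by
        gcongr
        linarith

/-- The discrepancy of the points `w 0, …, w (N - 1)`, weighted by `ψ`, for a test function. -/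
noncomputable def discrepancy {d : ℕ} (ψ : (Fin d → ℝ) → ℝ) (w : ℕ → Fin d → ℝ) (N : ℕ)
    (f : (Fin d → ℝ) → ℝ) : ℝ :=
  ∑ n ∈ Finset.range N, ψ (w n) * f (w n) - N * ∫ y, ψ y * f y

lemma exists_abs_discrepancy_cos_le {d : ℕ} {γ : ℝ} {w : ℕ → Fin d → ℝ}
    (hw : ∀ n, w n ∈ Set.Icc (0 : Fin d → ℝ) 1) (hUD : IsGammaUD γ w)
    {ψ : (Fin d → ℝ) → ℝ} (hψ : ContDiff ℝ (⊤ : ℕ∞) ψ) (hs : tsupport ψ ⊆ openCube d)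
    {ε : ℝ} (hε : 0 < ε) (hε1 : ε ≤ 1) :
    ∃ C : ℝ, 0 < C ∧ ∀ (ξ : Fin d → ℝ) (φ : ℝ) (N : ℕ), 1 ≤ N →
      |discrepancy ψ w N fun y => Real.cos (2 * Real.pi * (dotP ξ y + φ))| ≤
        C * (N : ℝ) ^ (1 - γ) * (1 + ‖ξ‖) ^ ε := by
  obtain ⟨C, hC, h⟩ := exists_norm_expSum_sub_integral_le hw hUD hψ hs hε hε1
  refine ⟨C, hC, fun ξ φ N hN => ?_⟩
  have hint : Integrable fun y => expTwoPi φ * (expTwoPi (dotP ξ y) * (ψ y : ℂ)) := by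
    have h1 := continuous_dotP ξ
    have h2 := hψ.continuous
    refine Continuous.integrable_of_hasCompactSupport (by fun_prop) ?_
    exact (((hasCompactSupport_of_openCube hs).comp_left (g := fun t : ℝ => (t : ℂ))
      (by simp)).mul_left).mul_left
  have hre : ∀ y, ψ y * Real.cos (2 * Real.pi * (dotP ξ y + φ)) =
      RCLike.re (expTwoPi φ * (expTwoPi (dotP ξ y) * (ψ y : ℂ))) := by
    intro y
    rw [← mul_assoc, ← expTwoPi_add, ← expTwoPi_re, add_comm φ]
    simp [mul_comm]
  have key : (discrepancy ψ w N fun y => Real.cos (2 * Real.pi * (dotP ξ y + φ))) =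
      (expTwoPi φ * (∑ n ∈ Finset.range N, expTwoPi (dotP ξ (w n)) * (ψ (w n) : ℂ) -
        N * ∫ y, expTwoPi (dotP ξ y) * (ψ y : ℂ))).re := by
    simp only [discrepancy, hre]
    rw [integral_re hint, integral_const_mul, mul_sub, Finset.mul_sum, mul_left_comm,
      ← Complex.ofReal_natCast]
    simp only [Complex.sub_re, Complex.re_sum, Complex.re_ofReal_mul, RCLike.re_to_complex]
  rw [key]
  refine (Complex.abs_re_le_norm _).trans ?_
  rw [norm_mul, norm_expTwoPi, one_mul]
  exact h ξ N hN

section Discrepancy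

variable {d : ℕ} {ψ : (Fin d → ℝ) → ℝ} {w : ℕ → Fin d → ℝ} {N : ℕ} {f g : (Fin d → ℝ) → ℝ}

lemma discrepancy_add (hf : Integrable fun y => ψ y * f y) (hg : Integrable fun y => ψ y * g y) :
    discrepancy ψ w N (fun y => f y + g y) = discrepancy ψ w N f + discrepancy ψ w N g := by
  simp only [discrepancy, mul_add, Finset.sum_add_distrib]
  rw [integral_add hf hg]
  ring

lemma discrepancy_const_mul (c : ℝ) :
    discrepancy ψ w N (fun y => c * f y) = c * discrepancy ψ w N f := by
  simp only [discrepancy, mul_left_comm _ c, ← Finset.mul_sum, integral_const_mul]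
  ring

lemma eq_zero_of_notMem_Icc (hs : tsupport ψ ⊆ openCube d) {y : Fin d → ℝ}
    (hy : y ∉ Set.Icc (0 : Fin d → ℝ) 1) : ψ y = 0 := by
  by_contra h
  have h' := hs (subset_tsupport ψ h)
  exact hy ⟨fun i => (h' i).1.le, fun i => (h' i).2.le⟩

lemma discrepancy_congr (hs : tsupport ψ ⊆ openCube d)
    (h : ∀ y ∈ Set.Icc (0 : Fin d → ℝ) 1, f y = g y) :
    discrepancy ψ w N f = discrepancy ψ w N g := by
  have h' : ∀ y, ψ y * f y = ψ y * g y := by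
    intro y
    by_cases hy : y ∈ Set.Icc (0 : Fin d → ℝ) 1
    · rw [h y hy]
    · simp [eq_zero_of_notMem_Icc hs hy]
  simp only [discrepancy, h']

lemma discrepancy_eq_zero (hs : tsupport ψ ⊆ openCube d)
    (h : ∀ y ∈ Set.Icc (0 : Fin d → ℝ) 1, f y = 0) :
    discrepancy ψ w N f = 0 := by
  rw [discrepancy_congr hs h]
  simp [discrepancy]

lemma integrable_mul_of_bounded (hψ : Continuous ψ) (hs : tsupport ψ ⊆ openCube d)
    (hf : Measurable f) {B : ℝ} (hB : ∀ y, |f y| ≤ B) : Integrable fun y => ψ y * f y :=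
  (hψ.integrable_of_hasCompactSupport (hasCompactSupport_of_openCube hs)).mul_bdd
    hf.aestronglyMeasurable (Filter.Eventually.of_forall hB)

lemma integrable_mul_of_continuous (hψ : Continuous ψ) (hs : tsupport ψ ⊆ openCube d)
    (hf : Continuous f) : Integrable fun y => ψ y * f y :=
  (hψ.mul hf).integrable_of_hasCompactSupport (hasCompactSupport_of_openCube hs).mul_right

lemma hasSum_discrepancy (hψ : Continuous ψ) (hs : tsupport ψ ⊆ openCube d)
    (hw : ∀ n, w n ∈ Set.Icc (0 : Fin d → ℝ) 1) {F : ℕ → (Fin d → ℝ) → ℝ}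
    (hF : ∀ n, Continuous (F n)) {B : ℕ → ℝ} (hB : ∀ n y, |F n y| ≤ B n) (hBs : Summable B)
    (hsum : ∀ y ∈ Set.Icc (0 : Fin d → ℝ) 1, HasSum (fun n => F n y) (f y)) :
    HasSum (fun n => discrepancy ψ w N (F n)) (discrepancy ψ w N f) := by
  have hint : HasSum (fun n => ∫ y, ψ y * F n y) (∫ y, ψ y * f y) := by
    have h1 : ∀ n, Integrable fun y => ψ y * F n y := fun n =>
      integrable_mul_of_continuous hψ hs (hF n)
    have hψi : Integrable fun y => ‖ψ y‖ :=
      (hψ.integrable_of_hasCompactSupport (hasCompactSupport_of_openCube hs)).norm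
    have h2 : Summable fun n => ∫ y, ‖ψ y * F n y‖ := by
      refine Summable.of_nonneg_of_le (fun n => integral_nonneg fun y => norm_nonneg _)
        (fun n => ?_) (hBs.mul_left (∫ y, ‖ψ y‖))
      rw [← integral_mul_const]
      refine integral_mono (h1 n).norm (hψi.mul_const _) fun y => ?_
      simp only [norm_mul]
      exact mul_le_mul_of_nonneg_left (hB n y) (norm_nonneg _)
    have h3 := hasSum_integral_of_summable_integral_norm h1 h2
    have h4 : (fun y => ψ y * f y) = fun y => ∑' n, ψ y * F n y := by
      funext y
      by_cases hy : y ∈ Set.Icc (0 : Fin d → ℝ) 1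
      · exact ((hsum y hy).mul_left (ψ y)).tsum_eq.symm
      · simp [eq_zero_of_notMem_Icc hs hy]
    rw [h4]
    exact h3
  exact (hasSum_sum fun n _ => (hsum (w n) (hw n)).mul_left (ψ (w n))).sub
    (hint.mul_left (N : ℝ))

lemma abs_discrepancy_le_of_abs_sub_le (hψ0 : 0 ≤ ψ) {h₁ h₂ : (Fin d → ℝ) → ℝ}
    (hf : Integrable fun y => ψ y * f y) (hg : Integrable fun y => ψ y * g y)
    (hh₁ : Integrable fun y => ψ y * h₁ y) (hh₂ : Integrable fun y => ψ y * h₂ y)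
    (hfg : ∀ y, |f y - g y| ≤ h₁ y + h₂ y) :
    |discrepancy ψ w N f| ≤ |discrepancy ψ w N g| + |discrepancy ψ w N h₁| +
      |discrepancy ψ w N h₂| + 2 * N * ((∫ y, ψ y * h₁ y) + ∫ y, ψ y * h₂ y) := by
  have hs : |∑ n ∈ Finset.range N, ψ (w n) * f (w n) - ∑ n ∈ Finset.range N, ψ (w n) * g (w n)| ≤
      ∑ n ∈ Finset.range N, ψ (w n) * h₁ (w n) + ∑ n ∈ Finset.range N, ψ (w n) * h₂ (w n) := by
    rw [← Finset.sum_sub_distrib, ← Finset.sum_add_distrib]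
    refine (Finset.abs_sum_le_sum_abs _ _).trans (Finset.sum_le_sum fun n _ => ?_)
    rw [← mul_sub, ← mul_add, abs_mul, abs_of_nonneg (hψ0 _)]
    exact mul_le_mul_of_nonneg_left (hfg _) (hψ0 _)
  have hi : |(∫ y, ψ y * f y) - ∫ y, ψ y * g y| ≤ (∫ y, ψ y * h₁ y) + ∫ y, ψ y * h₂ y := by
    rw [← integral_sub hf hg, ← integral_add hh₁ hh₂]
    refine (abs_integral_le_integral_abs).trans ?_
    refine integral_mono (hf.sub hg).abs (hh₁.add hh₂) fun y => ?_
    beta_reduce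
    rw [← mul_sub, ← mul_add, abs_mul, abs_of_nonneg (hψ0 _)]
    exact mul_le_mul_of_nonneg_left (hfg _) (hψ0 _)
  have hi' := mul_le_mul_of_nonneg_left hi (Nat.cast_nonneg (α := ℝ) N)
  rw [← abs_of_nonneg (Nat.cast_nonneg (α := ℝ) N), ← abs_mul,
    abs_of_nonneg (Nat.cast_nonneg (α := ℝ) N)] at hi'
  simp only [discrepancy]
  rw [abs_le] at hs hi'
  rw [abs_le]
  constructor <;>
  linarith [hs.1, hs.2, hi'.1, hi'.2,
    le_abs_self (∑ n ∈ Finset.range N, ψ (w n) * g (w n) - N * ∫ y, ψ y * g y),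
    neg_abs_le (∑ n ∈ Finset.range N, ψ (w n) * g (w n) - N * ∫ y, ψ y * g y),
    le_abs_self (∑ n ∈ Finset.range N, ψ (w n) * h₁ (w n) - N * ∫ y, ψ y * h₁ y),
    le_abs_self (∑ n ∈ Finset.range N, ψ (w n) * h₂ (w n) - N * ∫ y, ψ y * h₂ y)]

end Discrepancy

/-- The piecewise linear function equal to `1` on `[a, b]` and to `0` outside `[a - δ, b + δ]`. -/
noncomputable def trapezoid (δ a b t : ℝ) : ℝ :=
  (|t - (a - δ)| - |t - a| - |t - b| + |t - (b + δ)|) / (2 * δ)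

section Trapezoid

variable {δ a b t : ℝ}

@[fun_prop]
lemma continuous_trapezoid (δ a b : ℝ) : Continuous (trapezoid δ a b) := by
  unfold trapezoid
  fun_prop

lemma trapezoid_eq_one (hδ : 0 < δ) (h₁ : a ≤ t) (h₂ : t ≤ b) : trapezoid δ a b t = 1 := by
  unfold trapezoid
  rw [abs_of_nonneg (by linarith : 0 ≤ t - (a - δ)), abs_of_nonneg (by linarith : 0 ≤ t - a),
    abs_of_nonpos (by linarith : t - b ≤ 0), abs_of_nonpos (by linarith : t - (b + δ) ≤ 0)]
  field_simp
  ring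

lemma trapezoid_eq_zero (hδ : 0 < δ) (hab : a ≤ b) (h : t ≤ a - δ ∨ b + δ ≤ t) :
    trapezoid δ a b t = 0 := by
  unfold trapezoid
  rcases h with h | h
  · rw [abs_of_nonpos (by linarith : t - (a - δ) ≤ 0), abs_of_nonpos (by linarith : t - a ≤ 0),
      abs_of_nonpos (by linarith : t - b ≤ 0), abs_of_nonpos (by linarith : t - (b + δ) ≤ 0)]
    ring
  · rw [abs_of_nonneg (by linarith : 0 ≤ t - (a - δ)), abs_of_nonneg (by linarith : 0 ≤ t - a),
      abs_of_nonneg (by linarith : 0 ≤ t - b), abs_of_nonneg (by linarith : 0 ≤ t - (b + δ))]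
    ring

lemma trapezoid_mem_Icc (hδ : 0 < δ) (hab : a ≤ b) (t : ℝ) :
    trapezoid δ a b t ∈ Set.Icc (0 : ℝ) 1 := by
  unfold trapezoid
  rw [Set.mem_Icc, le_div_iff₀ (by positivity), div_le_iff₀ (by positivity)]
  rcases abs_cases (t - (a - δ)) with h1 | h1 <;> rcases abs_cases (t - a) with h2 | h2 <;>
    rcases abs_cases (t - b) with h3 | h3 <;> rcases abs_cases (t - (b + δ)) with h4 | h4 <;>
    constructor <;> linarith

open scoped Classical in
lemma abs_indicator_sub_trapezoid_le (hδ : 0 < δ) (hab : a ≤ b) (t : ℝ) :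
    |(if a ≤ t ∧ t ≤ b then 1 else 0) - trapezoid δ a b t| ≤
      trapezoid δ (a - δ) a t + trapezoid δ b (b + δ) t := by
  have h1 := trapezoid_mem_Icc hδ (by linarith : a - δ ≤ a) t
  have h2 := trapezoid_mem_Icc hδ (by linarith : b ≤ b + δ) t
  have h3 := trapezoid_mem_Icc hδ hab t
  split_ifs with h
  · rw [trapezoid_eq_one hδ h.1 h.2, sub_self, abs_zero]
    linarith [h1.1, h2.1]
  · rw [zero_sub, abs_neg, abs_of_nonneg h3.1]
    by_cases h4 : t ≤ a - δ ∨ b + δ ≤ t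
    · rw [trapezoid_eq_zero hδ hab h4]
      linarith [h1.1, h2.1]
    · push Not at h4
      by_cases h5 : t ≤ a
      · rw [trapezoid_eq_one hδ h4.1.le h5]
        linarith [h3.2, h2.1]
      · push Not at h5
        have h6 : b ≤ t := by
          by_contra h6
          push Not at h6
          exact h ⟨h5.le, h6.le⟩
        rw [trapezoid_eq_one (a := b) hδ h6 h4.2.le]
        linarith [h3.2, h1.1]

lemma hasSum_cos_div_sq {L : ℝ} (hL : 0 < L) (ht : |t| ≤ L) :
    HasSum (fun n : ℕ => 1 / (n : ℝ) ^ 2 * Real.cos (2 * Real.pi * n * t / L))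
      (Real.pi ^ 2 * ((t / L) ^ 2 - |t| / L + 1 / 6)) := by
  have hx : |t| / L ∈ Set.Icc (0 : ℝ) 1 :=
    ⟨by positivity, (div_le_one hL).2 ht⟩
  have h := hasSum_one_div_nat_pow_mul_cos one_ne_zero hx
  have hB : (Polynomial.map (algebraMap ℚ ℝ) (Polynomial.bernoulli (2 * 1))).eval (|t| / L) =
      (t / L) ^ 2 - |t| / L + 1 / 6 := by
    rw [show (t / L) ^ 2 = (|t| / L) ^ 2 by simp [div_pow], one_div]
    exact bernoulliFun_two _
  rw [hB] at h
  convert h using 1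
  · funext n
    congr 1
    rcases abs_cases t with h | h
    · rw [h.1]; congr 1; ring
    · rw [h.1, ← Real.cos_neg]; congr 1; ring
  · rw [mul_one, Nat.factorial_two]
    push_cast
    ring

end Trapezoid

section TrapezoidFourier

/-- The amplitude of the `n`-th term of the Fourier expansion of a trapezoid on a circle of
length `2 * L`. -/
noncomputable def trapezoidCoeff (L δ : ℝ) (n : ℕ) : ℝ :=
  -(L / (Real.pi ^ 2 * δ)) * (1 / (n : ℝ) ^ 2) * Real.sin (Real.pi * n * δ / L)

lemma hasSum_trapezoid {L δ a b t : ℝ} (hL : 0 < L) (hδ : 0 < δ) (h₁ : |t - (a - δ)| ≤ L)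
    (h₂ : |t - a| ≤ L) (h₃ : |t - b| ≤ L) (h₄ : |t - (b + δ)| ≤ L) :
    HasSum (fun n : ℕ => trapezoidCoeff L δ n *
      (Real.cos (2 * Real.pi * (n / L * t + (n * (-a + δ / 2) / L + 1 / 4))) +
        Real.cos (2 * Real.pi * (n / L * t + (n * (-b - δ / 2) / L - 1 / 4)))))
      (trapezoid δ a b t - ((b - a) + δ) / L) := by
  have h := ((((hasSum_cos_div_sq hL h₁).sub (hasSum_cos_div_sq hL h₂)).sub
    (hasSum_cos_div_sq hL h₃)).add (hasSum_cos_div_sq hL h₄)).mul_left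
    (-(L / (2 * Real.pi ^ 2 * δ)))
  have hpi := Real.pi_ne_zero
  convert h using 1
  · rfl
  · funext n
    have e₁ : Real.cos (2 * Real.pi * (n / L * t + (n * (-a + δ / 2) / L + 1 / 4))) =
        -Real.sin (2 * Real.pi * n * (t - a + δ / 2) / L) := by
      rw [← Real.cos_add_pi_div_two]
      congr 1
      ring
    have e₂ : Real.cos (2 * Real.pi * (n / L * t + (n * (-b - δ / 2) / L - 1 / 4))) =
        Real.sin (2 * Real.pi * n * (t - b - δ / 2) / L) := by
      rw [← Real.cos_sub_pi_div_two]
      congr 1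
      ring
    have e₃ : Real.cos (2 * Real.pi * n * (t - (a - δ)) / L) -
        Real.cos (2 * Real.pi * n * (t - a) / L) =
        -2 * Real.sin (2 * Real.pi * n * (t - a + δ / 2) / L) *
          Real.sin (Real.pi * n * δ / L) := by
      rw [Real.cos_sub_cos]
      congr 1
      · congr 2; ring
      · congr 1; ring
    have e₄ : Real.cos (2 * Real.pi * n * (t - b) / L) -
        Real.cos (2 * Real.pi * n * (t - (b + δ)) / L) =
        -2 * Real.sin (2 * Real.pi * n * (t - b - δ / 2) / L) *
          Real.sin (Real.pi * n * δ / L) := by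
      rw [Real.cos_sub_cos]
      congr 1
      · congr 2; ring
      · congr 1; ring
    rw [e₁, e₂, trapezoidCoeff]
    linear_combination (L / (2 * Real.pi ^ 2 * δ)) * (1 / (n : ℝ) ^ 2) * (e₃ - e₄)
  · unfold trapezoid
    field_simp
    ring

lemma abs_sin_le_rpow {x s : ℝ} (hx : 0 < x) (hs : 0 ≤ s) (hs1 : s ≤ 1) :
    |Real.sin x| ≤ x ^ (1 - s) := by
  rcases le_total x 1 with h | h
  · calc |Real.sin x| ≤ x := (Real.abs_sin_le_abs).trans_eq (abs_of_pos hx)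
      _ = x ^ (1 : ℝ) := (Real.rpow_one x).symm
      _ ≤ x ^ (1 - s) := Real.rpow_le_rpow_of_exponent_ge hx h (by linarith)
  · exact (Real.abs_sin_le_one x).trans (Real.one_le_rpow h (by linarith))

lemma abs_trapezoidCoeff_le {L δ s : ℝ} (hL : 0 < L) (hδ : 0 < δ) (hs : 0 ≤ s) (hs1 : s ≤ 1)
    (n : ℕ) : |trapezoidCoeff L δ n| ≤ (L / δ) ^ s * (n : ℝ) ^ (-1 - s) := by
  rcases Nat.eq_zero_or_pos n with rfl | hn
  · rw [trapezoidCoeff]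
    simp only [CharP.cast_eq_zero, mul_zero, zero_mul, zero_div, Real.sin_zero, abs_zero]
    positivity
  have hn' : (0 : ℝ) < n := by exact_mod_cast hn
  have hpi := Real.pi_pos
  have h := abs_sin_le_rpow (x := Real.pi * n * δ / L) (by positivity) hs hs1
  rw [trapezoidCoeff, abs_mul, abs_mul, abs_neg, abs_of_pos (by positivity),
    abs_of_pos (a := 1 / (n : ℝ) ^ 2) (by positivity)]
  calc L / (Real.pi ^ 2 * δ) * (1 / (n : ℝ) ^ 2) * |Real.sin (Real.pi * n * δ / L)|
      ≤ L / (Real.pi ^ 2 * δ) * (1 / (n : ℝ) ^ 2) * (Real.pi * n * δ / L) ^ (1 - s) := by gcongr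
    _ = Real.pi ^ (-1 - s) * ((L / δ) ^ s * (n : ℝ) ^ (-1 - s)) := by
      rw [show Real.pi * n * δ / L = Real.pi * (n * (L / δ)⁻¹) by field_simp,
        Real.mul_rpow (by positivity) (by positivity), Real.mul_rpow (by positivity)
        (by positivity), Real.inv_rpow (by positivity), Real.rpow_sub hpi, Real.rpow_sub hn',
        Real.rpow_sub (by positivity), Real.rpow_sub hpi, Real.rpow_sub hn', Real.rpow_one,
        Real.rpow_one, Real.rpow_one, Real.rpow_neg_one, Real.rpow_neg_one]
      field_simp
    _ ≤ 1 * ((L / δ) ^ s * (n : ℝ) ^ (-1 - s)) := by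
      gcongr
      exact Real.rpow_le_one_of_one_le_of_nonpos (by linarith [Real.pi_gt_three]) (by linarith)
    _ = _ := one_mul _

end TrapezoidFourier

lemma dotP_mem_Icc {d : ℕ} {x y : Fin d → ℝ} (hx : x ∈ Set.Icc (0 : Fin d → ℝ) 1)
    (hy : y ∈ Set.Icc (0 : Fin d → ℝ) 1) : dotP x y ∈ Set.Icc (0 : ℝ) d := by
  refine ⟨Finset.sum_nonneg fun i _ => mul_nonneg (hx.1 i) (hy.1 i), ?_⟩
  calc dotP x y ≤ ∑ _i : Fin d, (1 : ℝ) :=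
        Finset.sum_le_sum fun i _ => mul_le_one₀ (hx.2 i) (hy.1 i) (hy.2 i)
    _ = d := by simp

lemma dotP_smul_left {d : ℕ} (c : ℝ) (x y : Fin d → ℝ) : dotP (c • x) y = c * dotP x y := by
  simp [dotP, Finset.mul_sum, mul_assoc]

lemma exists_abs_discrepancy_trapezoid_le {d : ℕ} {γ : ℝ} {w : ℕ → Fin d → ℝ}
    {ψ : (Fin d → ℝ) → ℝ} (hw : ∀ n, w n ∈ Set.Icc (0 : Fin d → ℝ) 1) (hUD : IsGammaUD γ w)
    (hψ : ContDiff ℝ (⊤ : ℕ∞) ψ) (hs : tsupport ψ ⊆ openCube d) {ε : ℝ} (hε : 0 < ε)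
    (hε1 : ε ≤ 1) :
    ∃ C > 0, ∀ x ∈ Set.Icc (0 : Fin d → ℝ) 1, ∀ a b : ℝ, -1 ≤ a → a ≤ b → b ≤ d + 1 →
      ∀ N : ℕ, 1 ≤ N → |discrepancy ψ w N fun y => trapezoid (1 / N) a b (dotP x y)| ≤
        C * (N : ℝ) ^ (1 - γ + ε) := by
  obtain ⟨C, hC, hD⟩ := exists_abs_discrepancy_cos_le hw hUD hψ hs (half_pos hε)
    (by linarith : ε / 2 ≤ 1)
  have hsumm : Summable fun n : ℕ => (n : ℝ) ^ (-1 - ε / 2) :=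
    Real.summable_nat_rpow.2 (by linarith)
  set S : ℝ := ∑' n : ℕ, (n : ℝ) ^ (-1 - ε / 2) with hS
  have hS0 : 0 ≤ S := tsum_nonneg fun n => by positivity
  set L : ℝ := d + 3 with hLdef
  have hL : 0 < L := by positivity
  have hL1 : 1 ≤ L := by rw [hLdef]; linarith [Nat.cast_nonneg (α := ℝ) d]
  refine ⟨C + 4 * C * L ^ ε * S, by positivity, fun x hx a b ha hab hb N hN => ?_⟩
  have hN1 : (1 : ℝ) ≤ N := by exact_mod_cast hN
  have hN0 : (0 : ℝ) < N := by linarith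
  set δ : ℝ := 1 / N with hδdef
  have hδ : 0 < δ := by positivity
  have hδ1 : δ ≤ 1 := by rw [hδdef, div_le_one hN0]; exact hN1
  set q := trapezoidCoeff L δ with hq
  set F₁ : ℕ → (Fin d → ℝ) → ℝ := fun n y =>
    Real.cos (2 * Real.pi * (dotP ((n / L) • x) y + (n * (-a + δ / 2) / L + 1 / 4))) with hF₁
  set F₂ : ℕ → (Fin d → ℝ) → ℝ := fun n y =>
    Real.cos (2 * Real.pi * (dotP ((n / L) • x) y + (n * (-b - δ / 2) / L - 1 / 4))) with hF₂
  have hF₁c : ∀ n, Continuous (F₁ n) := fun n =>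
    Real.continuous_cos.comp (((continuous_dotP _).add continuous_const).const_mul _)
  have hF₂c : ∀ n, Continuous (F₂ n) := fun n =>
    Real.continuous_cos.comp (((continuous_dotP _).add continuous_const).const_mul _)
  have hqle : ∀ n, |q n| ≤ (L / δ) ^ ε * (n : ℝ) ^ (-1 - ε) :=
    abs_trapezoidCoeff_le hL hδ hε.le hε1
  have hexp : HasSum (fun n => discrepancy ψ w N fun y => q n * (F₁ n y + F₂ n y))
      (discrepancy ψ w N fun y => trapezoid δ a b (dotP x y) - ((b - a) + δ) / L) := by
    refine hasSum_discrepancy hψ.continuous hs hw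
      (fun n => ((hF₁c n).add (hF₂c n)).const_mul _)
      (B := fun n => (L / δ) ^ ε * (n : ℝ) ^ (-1 - ε) * 2) (fun n y => ?_)
      (((Real.summable_nat_rpow.2 (by linarith)).mul_left _).mul_right _) (fun y hy => ?_)
    · rw [abs_mul]
      refine mul_le_mul (hqle n) ?_ (abs_nonneg _) (by positivity)
      refine (abs_add_le _ _).trans ?_
      linarith [Real.abs_cos_le_one
        (2 * Real.pi * (dotP ((n / L) • x) y + (n * (-a + δ / 2) / L + 1 / 4))),
        Real.abs_cos_le_one
        (2 * Real.pi * (dotP ((n / L) • x) y + (n * (-b - δ / 2) / L - 1 / 4)))]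
    · have ht := dotP_mem_Icc hx hy
      have h := hasSum_trapezoid (t := dotP x y) (a := a) (b := b) hL hδ
        (abs_le.2 ⟨by linarith [ht.1, ht.2], by linarith [ht.1, ht.2]⟩)
        (abs_le.2 ⟨by linarith [ht.1, ht.2], by linarith [ht.1, ht.2]⟩)
        (abs_le.2 ⟨by linarith [ht.1, ht.2], by linarith [ht.1, ht.2]⟩)
        (abs_le.2 ⟨by linarith [ht.1, ht.2], by linarith [ht.1, ht.2]⟩)
      simpa only [hF₁, hF₂, dotP_smul_left] using h
  have hterm : ∀ n, ‖discrepancy ψ w N fun y => q n * (F₁ n y + F₂ n y)‖ ≤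
      4 * C * L ^ ε * (N : ℝ) ^ (1 - γ + ε) * (n : ℝ) ^ (-1 - ε / 2) := by
    intro n
    rw [discrepancy_const_mul, discrepancy_add
      (integrable_mul_of_continuous hψ.continuous hs (hF₁c n))
      (integrable_mul_of_continuous hψ.continuous hs (hF₂c n)), Real.norm_eq_abs, abs_mul]
    rcases Nat.eq_zero_or_pos n with rfl | hn
    · have : q 0 = 0 := by simp [hq, trapezoidCoeff]
      rw [this, abs_zero, zero_mul]
      positivity
    have hn1 : (1 : ℝ) ≤ n := by exact_mod_cast hn
    have hn0 : (0 : ℝ) < n := by linarith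
    have hξ : ‖((n : ℝ) / L) • x‖ ≤ n := by
      rw [norm_smul, Real.norm_of_nonneg (by positivity)]
      have hx1 : ‖x‖ ≤ 1 := (pi_norm_le_iff_of_nonneg zero_le_one).2 fun i => by
        rw [Real.norm_of_nonneg (hx.1 i)]; exact hx.2 i
      calc (n : ℝ) / L * ‖x‖ ≤ n / 1 * 1 := by gcongr
        _ = n := by ring
    have hξ' : (1 + ‖((n : ℝ) / L) • x‖) ^ (ε / 2) ≤ 2 * (n : ℝ) ^ (ε / 2) := by
      calc (1 + ‖((n : ℝ) / L) • x‖) ^ (ε / 2) ≤ (2 * (n : ℝ)) ^ (ε / 2) := by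
            gcongr; linarith
        _ = 2 ^ (ε / 2) * (n : ℝ) ^ (ε / 2) := Real.mul_rpow (by norm_num) hn0.le
        _ ≤ 2 ^ (1 : ℝ) * (n : ℝ) ^ (ε / 2) := by gcongr <;> linarith
        _ = _ := by rw [Real.rpow_one]
    have hD' : ∀ φ, |discrepancy ψ w N fun y =>
        Real.cos (2 * Real.pi * (dotP (((n : ℝ) / L) • x) y + φ))| ≤
        C * (N : ℝ) ^ (1 - γ) * (2 * (n : ℝ) ^ (ε / 2)) := fun φ =>
      (hD _ φ N hN).trans (mul_le_mul_of_nonneg_left hξ' (by positivity))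
    have h12 : |discrepancy ψ w N (F₁ n) + discrepancy ψ w N (F₂ n)| ≤
        4 * (C * (N : ℝ) ^ (1 - γ) * (n : ℝ) ^ (ε / 2)) := by
      refine (abs_add_le _ _).trans ?_
      have h1 : |discrepancy ψ w N (F₁ n)| ≤ _ := hD' _
      have h2 : |discrepancy ψ w N (F₂ n)| ≤ _ := hD' _
      linarith
    have hLδ : (L / δ) ^ ε = L ^ ε * (N : ℝ) ^ ε := by
      rw [hδdef, div_div_eq_mul_div, div_one, Real.mul_rpow hL.le hN0.le]
    calc |q n| * |discrepancy ψ w N (F₁ n) + discrepancy ψ w N (F₂ n)|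
        ≤ ((L / δ) ^ ε * (n : ℝ) ^ (-1 - ε)) *
          (4 * (C * (N : ℝ) ^ (1 - γ) * (n : ℝ) ^ (ε / 2))) :=
          mul_le_mul (hqle n) h12 (abs_nonneg _) (by positivity)
      _ = _ := by
        rw [hLδ, Real.rpow_add hN0, show -1 - ε / 2 = (-1 - ε) + ε / 2 by ring,
          Real.rpow_add hn0]
        ring
  have hmain : |discrepancy ψ w N fun y => trapezoid δ a b (dotP x y) - ((b - a) + δ) / L| ≤
      4 * C * L ^ ε * (N : ℝ) ^ (1 - γ + ε) * S := by
    rw [← hexp.tsum_eq, ← Real.norm_eq_abs]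
    exact tsum_of_norm_bounded (hsumm.hasSum.mul_left _) hterm
  have hconst : |discrepancy ψ w N fun _ => ((b - a) + δ) / L * 1| ≤ C * (N : ℝ) ^ (1 - γ) := by
    rw [discrepancy_const_mul, abs_mul]
    have h1 : |discrepancy ψ w N fun _ => (1 : ℝ)| ≤ C * (N : ℝ) ^ (1 - γ) := by
      simpa [dotP] using hD 0 0 N hN
    have h2 : |((b - a) + δ) / L| ≤ 1 := by
      rw [abs_of_nonneg (div_nonneg (by linarith) hL.le), div_le_one hL]
      linarith
    calc _ ≤ 1 * (C * (N : ℝ) ^ (1 - γ)) := mul_le_mul h2 h1 (abs_nonneg _) zero_le_one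
      _ = _ := one_mul _
  have hsplit : (discrepancy ψ w N fun y => trapezoid δ a b (dotP x y)) =
      (discrepancy ψ w N fun y => trapezoid δ a b (dotP x y) - ((b - a) + δ) / L) +
        discrepancy ψ w N fun _ => ((b - a) + δ) / L * 1 := by
    rw [← discrepancy_add]
    · simp only [mul_one, sub_add_cancel]
    · exact integrable_mul_of_continuous hψ.continuous hs
        (((continuous_trapezoid δ a b).comp (continuous_dotP x)).sub continuous_const)
    · exact integrable_mul_of_continuous hψ.continuous hs continuous_const
  have hpow : (N : ℝ) ^ (1 - γ) ≤ (N : ℝ) ^ (1 - γ + ε) :=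
    Real.rpow_le_rpow_of_exponent_le hN1 (by linarith)
  rw [hsplit]
  calc _ ≤ 4 * C * L ^ ε * (N : ℝ) ^ (1 - γ + ε) * S + C * (N : ℝ) ^ (1 - γ) :=
        (abs_add_le _ _).trans (add_le_add hmain hconst)
    _ ≤ 4 * C * L ^ ε * (N : ℝ) ^ (1 - γ + ε) * S + C * (N : ℝ) ^ (1 - γ + ε) := by gcongr
    _ = _ := by ring

section Slab

variable {d : ℕ} {x : Fin d → ℝ} {i : Fin d} {α β : ℝ}

lemma volume_slab_le (hi : 0 < x i) :
    volume {y | y ∈ Set.Icc (0 : Fin d → ℝ) 1 ∧ dotP x y ∈ Set.Icc α β} ≤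
      ENNReal.ofReal ((β - α) / x i) := by
  set M : Matrix (Fin d) (Fin d) ℝ := Matrix.updateRow 1 i x with hM
  have hdet : LinearMap.det (Matrix.toLin' M) = x i := by
    rw [LinearMap.det_toLin', hM, ← Matrix.cramer_transpose_apply, Matrix.transpose_one,
      Matrix.cramer_one]
    rfl
  have hsub : {y | y ∈ Set.Icc (0 : Fin d → ℝ) 1 ∧ dotP x y ∈ Set.Icc α β} ⊆
      Matrix.toLin' M ⁻¹' Set.Icc (Function.update 0 i α) (Function.update 1 i β) := by
    rintro y ⟨hy, hxy⟩
    have hMy : Matrix.toLin' M y = Function.update y i (dotP x y) := by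
      funext j
      rw [Matrix.toLin'_apply, hM, Matrix.mulVec]
      rcases eq_or_ne j i with rfl | hj
      · rw [Matrix.updateRow_self, Function.update_self]
        rfl
      · rw [Matrix.updateRow_ne hj, Function.update_of_ne hj]
        exact congrFun (Matrix.one_mulVec y) j
    rw [Set.mem_preimage, hMy]
    exact ⟨update_le_update_iff.2 ⟨hxy.1, fun j _ => hy.1 j⟩,
      update_le_update_iff.2 ⟨hxy.2, fun j _ => hy.2 j⟩⟩
  refine (measure_mono hsub).trans ?_
  rw [Measure.addHaar_preimage_linearMap _ (by rw [hdet]; exact hi.ne'), hdet, Real.volume_Icc_pi,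
    Finset.prod_eq_single i]
  · rw [Function.update_self, Function.update_self, ← ENNReal.ofReal_mul (abs_nonneg _),
      abs_of_pos (inv_pos.2 hi), div_eq_inv_mul]
  · intro j _ hj
    simp [Function.update_of_ne hj]
  · simp

lemma integral_mul_trapezoid_le {ψ : (Fin d → ℝ) → ℝ} (hψ : Continuous ψ)
    (hs : tsupport ψ ⊆ openCube d) {B δ : ℝ} (hB : ∀ y, |ψ y| ≤ B) (hδ : 0 < δ) (hi : 0 < x i)
    (hαβ : α ≤ β) :
    ∫ y, ψ y * trapezoid δ α β (dotP x y) ≤ B * ((β - α + 2 * δ) / x i) := by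
  have hB0 : 0 ≤ B := (abs_nonneg _).trans (hB 0)
  set S := {y | y ∈ Set.Icc (0 : Fin d → ℝ) 1 ∧ dotP x y ∈ Set.Icc (α - δ) (β + δ)} with hS
  have hSm : MeasurableSet S :=
    measurableSet_Icc.inter ((continuous_dotP x).measurable measurableSet_Icc)
  have hvol : volume S ≤ ENNReal.ofReal ((β - α + 2 * δ) / x i) := by
    have h := volume_slab_le (α := α - δ) (β := β + δ) hi
    rwa [show β + δ - (α - δ) = β - α + 2 * δ by ring] at h
  have hSfin : volume S ≠ ⊤ := ne_top_of_le_ne_top ENNReal.ofReal_ne_top hvol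
  have hle : ∀ y, ψ y * trapezoid δ α β (dotP x y) ≤ S.indicator (fun _ => B) y := by
    intro y
    have hT := trapezoid_mem_Icc hδ hαβ (dotP x y)
    by_cases hy : y ∈ S
    · rw [Set.indicator_of_mem hy]
      calc ψ y * trapezoid δ α β (dotP x y) ≤ B * 1 :=
            mul_le_mul ((le_abs_self _).trans (hB y)) hT.2 hT.1 hB0
        _ = B := mul_one B
    · rw [Set.indicator_of_notMem hy]
      by_cases hy1 : y ∈ Set.Icc (0 : Fin d → ℝ) 1
      · rw [trapezoid_eq_zero hδ hαβ, mul_zero]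
        by_contra! h
        exact hy ⟨hy1, h.1.le, h.2.le⟩
      · rw [eq_zero_of_notMem_Icc hs hy1, zero_mul]
  calc ∫ y, ψ y * trapezoid δ α β (dotP x y) ≤ ∫ y, S.indicator (fun _ => B) y :=
        integral_mono (integrable_mul_of_continuous hψ hs
          ((continuous_trapezoid δ α β).comp (continuous_dotP x)))
          ((integrable_indicator_iff hSm).2 (integrableOn_const hSfin)) hle
    _ = volume.real S * B := by rw [integral_indicator hSm, setIntegral_const, smul_eq_mul]
    _ ≤ ((β - α + 2 * δ) / x i) * B := by
        refine mul_le_mul_of_nonneg_right ?_ hB0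
        exact ENNReal.toReal_le_of_le_ofReal (div_nonneg (by linarith) hi.le) hvol
    _ = _ := mul_comm _ _

end Slab

open scoped Classical in
lemma exists_abs_discrepancy_indicator_le {d : ℕ} {γ : ℝ} (hγ : γ ≤ 1) {w : ℕ → Fin d → ℝ}
    {ψ : (Fin d → ℝ) → ℝ} (hw : ∀ n, w n ∈ Set.Icc (0 : Fin d → ℝ) 1) (hUD : IsGammaUD γ w)
    (hψ : ContDiff ℝ (⊤ : ℕ∞) ψ) (hψ0 : 0 ≤ ψ) (hs : tsupport ψ ⊆ openCube d) {ε c : ℝ}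
    (hε : 0 < ε) (hε1 : ε ≤ 1) (hc : 0 < c) :
    ∃ C > 0, ∀ x ∈ Set.Icc (0 : Fin d → ℝ) 1, ∀ a b : ℝ, c ≤ a → a ≤ b →
      ∀ N : ℕ, 1 ≤ N →
        |discrepancy ψ w N fun y => if a ≤ dotP x y ∧ dotP x y ≤ b then 1 else 0| ≤
          C * (N : ℝ) ^ (1 - γ + ε) := by
  obtain ⟨C, hC, hD⟩ := exists_abs_discrepancy_trapezoid_le hw hUD hψ hs hε hε1
  obtain ⟨B, hB⟩ := hψ.continuous.bounded_above_of_compact_support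
    (hasCompactSupport_of_openCube hs)
  have hB0 : 0 ≤ B := (norm_nonneg _).trans (hB 0)
  refine ⟨3 * C + 12 * B * (d / c), by positivity, fun x hx a b ha hab N hN => ?_⟩
  have hN1 : (1 : ℝ) ≤ N := by exact_mod_cast hN
  have hN0 : (0 : ℝ) < N := by linarith
  by_cases had : (d : ℝ) < a
  · rw [discrepancy_eq_zero hs, abs_zero]
    · positivity
    · intro y hy
      rw [if_neg]
      intro h
      linarith [(dotP_mem_Icc hx hy).2]
  by_cases hsmall : ∀ i, x i < c / d
  · rw [discrepancy_eq_zero hs, abs_zero]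
    · positivity
    · intro y hy
      rw [if_neg]
      intro h
      have hd0 : 0 < d := Nat.pos_of_ne_zero fun h0 => by
        subst h0
        exact had (by rw [Nat.cast_zero]; linarith)
      have : Nonempty (Fin d) := ⟨⟨0, hd0⟩⟩
      have hd0' : (0 : ℝ) < d := by exact_mod_cast hd0
      have : dotP x y < c := by
        calc dotP x y ≤ ∑ i, x i :=
              Finset.sum_le_sum fun i _ => mul_le_of_le_one_right (hx.1 i) (hy.2 i)
          _ < ∑ _i : Fin d, c / d :=
              Finset.sum_lt_sum_of_nonempty Finset.univ_nonempty fun i _ => hsmall i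
          _ = c := by
              rw [Finset.sum_const, Finset.card_univ, Fintype.card_fin, nsmul_eq_mul]
              field_simp
      linarith [h.1]
  push Not at had hsmall
  obtain ⟨i, hi⟩ := hsmall
  have hd0 : 0 < d := i.pos
  have hd0' : (0 : ℝ) < d := by exact_mod_cast hd0
  have hi0 : 0 < x i := lt_of_lt_of_le (by positivity) hi
  set β := min b d with hβ
  have haβ : a ≤ β := le_min hab had
  have hβd : β ≤ d := min_le_right _ _
  rw [discrepancy_congr hs (g := fun y => if a ≤ dotP x y ∧ dotP x y ≤ β then (1 : ℝ) else 0)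
    (fun y hy => by simp only [hβ, le_min_iff, (dotP_mem_Icc hx hy).2, and_true])]
  set δ : ℝ := 1 / N with hδdef
  have hδ : 0 < δ := by positivity
  have hδ1 : δ ≤ 1 := by rw [hδdef, div_le_one hN0]; exact hN1
  have hTint : ∀ u v : ℝ, Integrable fun y => ψ y * trapezoid δ u v (dotP x y) := fun u v =>
    integrable_mul_of_continuous hψ.continuous hs
      ((continuous_trapezoid δ u v).comp (continuous_dotP x))
  have hm : Measurable fun y => if a ≤ dotP x y ∧ dotP x y ≤ β then (1 : ℝ) else 0 := by
    refine Measurable.ite ?_ measurable_const measurable_const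
    exact (continuous_dotP x).measurable measurableSet_Icc
  have key := abs_discrepancy_le_of_abs_sub_le (w := w) (N := N) hψ0
    (f := fun y => if a ≤ dotP x y ∧ dotP x y ≤ β then (1 : ℝ) else 0)
    (g := fun y => trapezoid δ a β (dotP x y))
    (h₁ := fun y => trapezoid δ (a - δ) a (dotP x y))
    (h₂ := fun y => trapezoid δ β (β + δ) (dotP x y))
    (integrable_mul_of_bounded hψ.continuous hs hm (B := 1)
      fun y => by split_ifs <;> simp)
    (hTint _ _) (hTint _ _) (hTint _ _)
    fun y => abs_indicator_sub_trapezoid_le hδ haβ (dotP x y)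
  have h1 := hD x hx a β (by linarith) haβ (by linarith) N hN
  have h2 := hD x hx (a - δ) a (by linarith) (by linarith) (by linarith) N hN
  have h3 := hD x hx β (β + δ) (by linarith) (by linarith) (by linarith) N hN
  have hslab : ∀ u v : ℝ, v - u = δ →
      N * ∫ y, ψ y * trapezoid δ u v (dotP x y) ≤ 3 * B * (d / c) := by
    intro u v huv
    have h := integral_mul_trapezoid_le hψ.continuous hs hB hδ hi0 (by linarith : u ≤ v)
    calc N * ∫ y, ψ y * trapezoid δ u v (dotP x y) ≤ N * (B * ((v - u + 2 * δ) / x i)) := by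
          gcongr
      _ = 3 * B * (1 / x i) := by
          rw [huv, hδdef]
          field_simp
          ring
      _ ≤ 3 * B * (1 / (c / d)) := by gcongr
      _ = _ := by rw [one_div_div]
  have h4 := hslab (a - δ) a (by ring)
  have h5 := hslab β (β + δ) (by ring)
  have hpow : 1 ≤ (N : ℝ) ^ (1 - γ + ε) := Real.one_le_rpow hN1 (by linarith)
  have h6 : 12 * B * (d / c) * 1 ≤ 12 * B * (d / c) * (N : ℝ) ^ (1 - γ + ε) := by gcongr
  linarith

section Assembly

variable {d : ℕ} {ψ : (Fin d → ℝ) → ℝ}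

open scoped Classical in
/-- The indicator of the slab `a ≤ x · y ≤ b`. -/
noncomputable def slabInd (a b : ℝ) (x y : Fin d → ℝ) : ℝ :=
  if a ≤ dotP x y ∧ dotP x y ≤ b then 1 else 0

lemma slabInd_comm (a b : ℝ) (x y : Fin d → ℝ) : slabInd a b x y = slabInd a b y x := by
  simp only [slabInd, dotP_comm x y]

lemma abs_slabInd_le (a b : ℝ) (x y : Fin d → ℝ) : |slabInd a b x y| ≤ 1 := by
  unfold slabInd
  split_ifs <;> simp

lemma measurable_slabInd (a b : ℝ) :
    Measurable fun p : (Fin d → ℝ) × (Fin d → ℝ) => slabInd a b p.1 p.2 := by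
  have h : Continuous fun p : (Fin d → ℝ) × (Fin d → ℝ) => dotP p.1 p.2 := by
    unfold dotP
    fun_prop
  exact Measurable.ite (h.measurable measurableSet_Icc) measurable_const measurable_const

lemma integrable_mul_slabInd (hψ : Continuous ψ) (hs : tsupport ψ ⊆ openCube d) (a b : ℝ)
    (x : Fin d → ℝ) : Integrable fun y => ψ y * slabInd a b x y :=
  integrable_mul_of_bounded hψ hs ((measurable_slabInd a b).comp measurable_prodMk_left)
    (abs_slabInd_le a b x)

lemma integrable_mul_integral_slabInd (hψ : Continuous ψ) (hψ0 : 0 ≤ ψ)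
    (hs : tsupport ψ ⊆ openCube d) (a b : ℝ) :
    Integrable fun x => ψ x * ∫ y, ψ y * slabInd a b x y := by
  have hm : StronglyMeasurable fun x => ∫ y, ψ y * slabInd a b x y := by
    refine StronglyMeasurable.integral_prod_right
      (f := fun x y => ψ y * slabInd a b x y) ?_
    exact ((hψ.measurable.comp measurable_snd).mul (measurable_slabInd a b)).stronglyMeasurable
  refine integrable_mul_of_bounded hψ hs hm.measurable (B := ∫ y, ψ y) fun x => ?_
  have hψi : Integrable ψ :=
    hψ.integrable_of_hasCompactSupport (hasCompactSupport_of_openCube hs)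
  rw [← Real.norm_eq_abs]
  refine norm_integral_le_of_norm_le hψi (Filter.Eventually.of_forall fun y => ?_)
  rw [norm_mul, Real.norm_of_nonneg (hψ0 y)]
  exact mul_le_of_le_one_right (hψ0 y) (abs_slabInd_le a b x y)

lemma discrepancy_integral_slabInd (hψ : Continuous ψ) (hψ0 : 0 ≤ ψ)
    (hs : tsupport ψ ⊆ openCube d) (v : ℕ → Fin d → ℝ) (N : ℕ) (a b : ℝ) :
    (discrepancy ψ v N fun x => ∫ y, ψ y * slabInd a b x y) =
      ∫ y, ψ y * discrepancy ψ v N (slabInd a b y) := by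
  have h1 : ∀ n, Integrable fun y => ψ (v n) * (ψ y * slabInd a b (v n) y) := fun n =>
    (integrable_mul_slabInd hψ hs a b (v n)).const_mul _
  have h2 : ∀ y, ψ y * discrepancy ψ v N (slabInd a b y) =
      (∑ n ∈ Finset.range N, ψ (v n) * (ψ y * slabInd a b (v n) y)) -
        N * (ψ y * ∫ z, ψ z * slabInd a b y z) := by
    intro y
    rw [discrepancy, mul_sub, Finset.mul_sum]
    congr 1
    · refine Finset.sum_congr rfl fun n _ => ?_
      rw [slabInd_comm a b y]
      ring
    · ring
  simp only [h2]
  rw [integral_sub (integrable_finsetSum _ fun n _ => h1 n)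
    ((integrable_mul_integral_slabInd hψ hψ0 hs a b).const_mul _),
    integral_finsetSum _ fun n _ => h1 n, integral_const_mul]
  simp only [integral_const_mul]
  rfl

end Assembly

open scoped Classical in
/-- Slab incidence theorem: for `γ`-uniformly distributed sequences `{v_n}`, `{w_m}` in
`[0,1]^d` and a smooth cutoff `ψ` supported in the open cube,
`∑_{a ≤ v_n·w_m ≤ b} ψ(v_n)ψ(w_m) = N² ∬_{Ω_{a,b}} ψ(x)ψ(y) dx dy + O_ε(N^{2-γ+ε})`. -/
theorem stmt11 (d : ℕ) (hd : 2 ≤ d) (γ : ℝ) (hγ : γ ∈ Set.Ioc (0:ℝ) (1/2))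
    (v w : ℕ → Fin d → ℝ)
    (hv : ∀ n, v n ∈ Set.Icc (0 : Fin d → ℝ) 1) (hw : ∀ m, w m ∈ Set.Icc (0 : Fin d → ℝ) 1)
    (hUDv : IsGammaUD γ v) (hUDw : IsGammaUD γ w)
    (ψ : (Fin d → ℝ) → ℝ) (hψsmooth : ContDiff ℝ (⊤ : ℕ∞) ψ) (hψpos : 0 ≤ ψ)
    (hψsupp : tsupport ψ ⊆ {x | ∀ i, x i ∈ Set.Ioo (0:ℝ) 1}) :
    ∀ ε : ℝ, 0 < ε → ∃ C : ℝ, 0 < C ∧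
      ∀ a b : ℝ, 1/100 ≤ a → a ≤ b → ∀ N : ℕ, 1 ≤ N →
        |(∑ p ∈ ((Finset.range N) ×ˢ (Finset.range N)).filter
              (fun p => a ≤ dotP (v p.1) (w p.2) ∧ dotP (v p.1) (w p.2) ≤ b),
            ψ (v p.1) * ψ (w p.2))
          - (N : ℝ) ^ 2 *
            ∫ x : Fin d → ℝ, ∫ y : Fin d → ℝ,
              (if a ≤ dotP x y ∧ dotP x y ≤ b then ψ x * ψ y else 0)|
        ≤ C * (N : ℝ) ^ (2 - γ + ε) := by
  intro ε hε
  have hψc := hψsmooth.continuous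
  set ε' := min ε 1 with hε'
  have hε'0 : 0 < ε' := lt_min hε one_pos
  obtain ⟨C₁, hC₁, hDw⟩ := exists_abs_discrepancy_indicator_le (c := 1 / 100)
    (by linarith [hγ.2] : γ ≤ 1) hw hUDw hψsmooth hψpos hψsupp hε'0 (min_le_right _ _) (by norm_num)
  obtain ⟨C₂, hC₂, hDv⟩ := exists_abs_discrepancy_indicator_le (c := 1 / 100)
    (by linarith [hγ.2] : γ ≤ 1) hv hUDv hψsmooth hψpos hψsupp hε'0 (min_le_right _ _) (by norm_num)
  obtain ⟨B, hB⟩ := hψc.bounded_above_of_compact_support (hasCompactSupport_of_openCube hψsupp)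
  have hB0 : 0 ≤ B := (norm_nonneg _).trans (hB 0)
  have hψi : Integrable ψ :=
    hψc.integrable_of_hasCompactSupport (hasCompactSupport_of_openCube hψsupp)
  have hJ : 0 ≤ ∫ y, ψ y := integral_nonneg hψpos
  refine ⟨B * C₁ + (∫ y, ψ y) * C₂ + 1, by positivity, fun a b ha hab N hN => ?_⟩
  have hN1 : (1 : ℝ) ≤ N := by exact_mod_cast hN
  have hN0 : (0 : ℝ) < N := by linarith
  set P := (N : ℝ) ^ (1 - γ + ε') with hP
  have hsum : (∑ p ∈ ((Finset.range N) ×ˢ (Finset.range N)).filter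
      (fun p => a ≤ dotP (v p.1) (w p.2) ∧ dotP (v p.1) (w p.2) ≤ b), ψ (v p.1) * ψ (w p.2)) =
      ∑ n ∈ Finset.range N, ψ (v n) *
        ∑ m ∈ Finset.range N, ψ (w m) * slabInd a b (v n) (w m) := by
    rw [Finset.sum_filter, Finset.sum_product]
    refine Finset.sum_congr rfl fun n _ => ?_
    rw [Finset.mul_sum]
    refine Finset.sum_congr rfl fun m _ => ?_
    unfold slabInd
    split_ifs <;> ring
  have hint : (∫ x : Fin d → ℝ, ∫ y : Fin d → ℝ,
      (if a ≤ dotP x y ∧ dotP x y ≤ b then ψ x * ψ y else 0)) =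
      ∫ x, ψ x * ∫ y, ψ y * slabInd a b x y := by
    simp only [← integral_const_mul]
    congr 1
    funext x
    congr 1
    funext y
    unfold slabInd
    split_ifs <;> ring
  have hsplit : (∑ n ∈ Finset.range N, ψ (v n) *
        ∑ m ∈ Finset.range N, ψ (w m) * slabInd a b (v n) (w m)) -
      (N : ℝ) ^ 2 * ∫ x, ψ x * ∫ y, ψ y * slabInd a b x y =
      (∑ n ∈ Finset.range N, ψ (v n) * discrepancy ψ w N (slabInd a b (v n))) +
        N * ∫ y, ψ y * discrepancy ψ v N (slabInd a b y) := by
    rw [← discrepancy_integral_slabInd hψc hψpos hψsupp]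
    simp only [discrepancy, mul_sub, Finset.sum_sub_distrib]
    rw [Finset.mul_sum]
    simp only [mul_left_comm (N : ℝ)]
    ring
  have hfirst : |∑ n ∈ Finset.range N, ψ (v n) * discrepancy ψ w N (slabInd a b (v n))| ≤
      N * (B * (C₁ * P)) := by
    calc _ ≤ ∑ n ∈ Finset.range N, |ψ (v n) * discrepancy ψ w N (slabInd a b (v n))| :=
          Finset.abs_sum_le_sum_abs _ _
      _ ≤ ∑ _n ∈ Finset.range N, B * (C₁ * P) := by
          refine Finset.sum_le_sum fun n _ => ?_
          rw [abs_mul]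
          exact mul_le_mul (hB _) (hDw (v n) (hv n) a b ha hab N hN) (abs_nonneg _) hB0
      _ = _ := by rw [Finset.sum_const, Finset.card_range, nsmul_eq_mul]
  have hsecond : |∫ y, ψ y * discrepancy ψ v N (slabInd a b y)| ≤ (∫ y, ψ y) * (C₂ * P) := by
    rw [← integral_mul_const, ← Real.norm_eq_abs]
    refine norm_integral_le_of_norm_le (hψi.mul_const _)
      (Filter.Eventually.of_forall fun y => ?_)
    rw [norm_mul, Real.norm_of_nonneg (hψpos y)]
    by_cases hy : y ∈ Set.Icc (0 : Fin d → ℝ) 1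
    · exact mul_le_mul_of_nonneg_left (hDv y hy a b ha hab N hN) (hψpos y)
    · rw [eq_zero_of_notMem_Icc hψsupp hy, zero_mul, zero_mul]
  have hpow : N * P ≤ (N : ℝ) ^ (2 - γ + ε) := by
    rw [hP, mul_comm, ← Real.rpow_add_one hN0.ne']
    exact Real.rpow_le_rpow_of_exponent_le hN1 (by linarith [min_le_left ε 1])
  rw [hsum, hint, hsplit]
  calc _ ≤ N * (B * (C₁ * P)) + N * ((∫ y, ψ y) * (C₂ * P)) := by
        refine (abs_add_le _ _).trans (add_le_add hfirst ?_)
        rw [abs_mul, abs_of_pos hN0]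
        gcongr
    _ = (B * C₁ + (∫ y, ψ y) * C₂) * (N * P) := by ring
    _ ≤ (B * C₁ + (∫ y, ψ y) * C₂ + 1) * (N : ℝ) ^ (2 - γ + ε) := by
        refine mul_le_mul (by linarith) hpow (by positivity) (by positivity)
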